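/- (Theorem 1, external angle exponent.) Define G(x) = (2/√π) ∫_0^x e^{−y²} dy. Fix W > 0, C > 0 and D₁, D₂ > 0. For each n ≥ 1 let r₁(n), r₂(n) be natural numbers with r₁(n)/n → D₁ and r₂(n)/n → D₂, set ξ_n = √(Cn), and define γ_n = (ξ_n/√π) ∫_0^∞ e^{−ξ_n² x²} G(x)^{r₁(n)} G(Wx)^{r₂(n)} dx. Then lim_{n→∞} −(1/n) log γ_n = C x₀² − D₁ log G(x₀) − D₂ log G(W x₀), where x₀ is the unique positive solution of 2C − D₁ g(x)/(x G(x)) − D₂ W g(Wx)/(x G(Wx)) = 0 with g(x) = (2/√π) e^{−x²}. -/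

import Mathlib

open Filter Topology

/-- The error-function normalization `G(x) = (2/√π) ∫_0^x e^{−y²} dy`. -/
noncomputable def erfG (x : ℝ) : ℝ := (2 / Real.sqrt Real.pi) * ∫ y in (0:ℝ)..x, Real.exp (-y ^ 2)

/-- `g(x) = (2/√π) e^{−x²}`, the derivative of `erfG`. -/
noncomputable def erfg (x : ℝ) : ℝ := (2 / Real.sqrt Real.pi) * Real.exp (-x ^ 2)

/-!
Write the integrand as `exp (φ x - c x²)` with `c = C n` and
`φ x = r₁(n) log G(x) + r₂(n) log G(W x)`, a concave nondecreasing function on `(0, ∞)`.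

Upper bound: replacing `φ` by its tangent line at `x₀` leaves a full Gaussian integral, equal to
`exp (φ x₀ - b x₀ + b² / (4 c))` with `b = φ'(x₀)`. The equation defining `x₀` says `b ≈ 2 c x₀`,
for which this is `exp (φ x₀ - c x₀²)` to exponential order.

Lower bound: on an interval of length `1 / √c` to the right of `x₀`, monotonicity gives `φ ≥ φ x₀`,
while `c x² ≤ (√c x₀ + 1)²`, which differs from `c x₀²` only by `O(√c)`.
-/

open MeasureTheory Real Set

section Concave

variable {s : Set ℝ} {f : ℝ → ℝ} {f' x z : ℝ}

lemma le_tangentLine_of_concaveOn (hf : ConcaveOn ℝ s f) (hx : x ∈ s) (hz : z ∈ s)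
    (hf' : HasDerivAt f f' z) : f x ≤ f z + f' * (x - z) := by
  rcases lt_trichotomy x z with hxz | rfl | hzx
  · have := hf.le_slope_of_hasDerivAt hx hz hxz hf'
    rw [slope_def_field, le_div_iff₀ (sub_pos.2 hxz)] at this
    linarith
  · simp
  · have := hf.slope_le_of_hasDerivAt hz hx hzx hf'
    rw [slope_def_field, div_le_iff₀ (sub_pos.2 hzx)] at this
    linarith

lemma concaveOn_comp_mul_left_Ioi {a : ℝ} (ha : 0 < a) (hf : ConcaveOn ℝ (Ioi 0) f) :
    ConcaveOn ℝ (Ioi 0) fun x ↦ f (a * x) := by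
  have hpre : LinearMap.mulLeft ℝ a ⁻¹' Ioi 0 = Ioi 0 := by ext x; simp [ha]
  exact hpre ▸ hf.comp_linearMap (LinearMap.mulLeft ℝ a)

end Concave

section GaussianWithLinearTerm

variable {c : ℝ} (b m z : ℝ)

lemma exp_linear_sub_mul_sq_eq (hc : c ≠ 0) (x : ℝ) :
    exp (m + b * (x - z) - c * x ^ 2) =
      exp (m - b * z + b ^ 2 / (4 * c)) * exp (-c * (x - b / (2 * c)) ^ 2) := by
  rw [← exp_add]
  congr 1
  field_simp
  ring

lemma integrable_exp_linear_sub_mul_sq (hc : 0 < c) :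
    Integrable fun x : ℝ ↦ exp (m + b * (x - z) - c * x ^ 2) := by
  simp only [exp_linear_sub_mul_sq_eq b m z hc.ne']
  exact ((integrable_exp_neg_mul_sq hc).comp_sub_right _).const_mul _

lemma integral_exp_linear_sub_mul_sq (hc : 0 < c) :
    ∫ x : ℝ, exp (m + b * (x - z) - c * x ^ 2) =
      exp (m - b * z + b ^ 2 / (4 * c)) * √(π / c) := by
  simp only [exp_linear_sub_mul_sq_eq b m z hc.ne']
  rw [integral_const_mul, integral_sub_right_eq_self (fun t ↦ exp (-c * t ^ 2)), integral_gaussian]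

end GaussianWithLinearTerm

/-- The integral of `exp φ` over the positive half-line against the centred Gaussian density
`√(c / π) * exp (-c * x ^ 2)`, whose mass on the half-line is `1 / 2`. The external angle `γ_n` is
of this form; the positive weight is encoded by its logarithm `φ` so that its log-concavity is
concavity of `φ`. -/
noncomputable def halfGaussianMean (c : ℝ) (φ : ℝ → ℝ) : ℝ :=
  √c / √π * ∫ x in Ioi 0, exp (φ x - c * x ^ 2)

section HalfGaussianMean

variable {c b z : ℝ} {φ : ℝ → ℝ}

lemma integrableOn_exp_sub_mul_sq (hc : 0 < c) (hz : 0 < z) (hconc : ConcaveOn ℝ (Ioi 0) φ)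
    (hmono : MonotoneOn φ (Ioi 0)) (hφ' : HasDerivAt φ b z) :
    IntegrableOn (fun x ↦ exp (φ x - c * x ^ 2)) (Ioi 0) := by
  have hmeas : AEMeasurable φ (volume.restrict (Ioi 0)) :=
    aemeasurable_restrict_of_monotoneOn measurableSet_Ioi hmono
  refine (integrable_exp_linear_sub_mul_sq b (φ z) z hc).integrableOn.mono'
    (measurable_exp.comp_aemeasurable (hmeas.sub (by fun_prop))).aestronglyMeasurable ?_
  filter_upwards [ae_restrict_mem measurableSet_Ioi] with x hx
  rw [norm_of_nonneg (exp_nonneg _)]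
  gcongr
  exact le_tangentLine_of_concaveOn hconc hx hz hφ'

lemma halfGaussianMean_le (hc : 0 < c) (hz : 0 < z) (hconc : ConcaveOn ℝ (Ioi 0) φ)
    (hmono : MonotoneOn φ (Ioi 0)) (hφ' : HasDerivAt φ b z) :
    halfGaussianMean c φ ≤ exp (φ z - b * z + b ^ 2 / (4 * c)) := by
  have hint := integrable_exp_linear_sub_mul_sq b (φ z) z hc
  calc
    halfGaussianMean c φ
      ≤ √c / √π * ∫ x in Ioi 0, exp (φ z + b * (x - z) - c * x ^ 2) := by
        refine mul_le_mul_of_nonneg_left (setIntegral_mono_on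
          (integrableOn_exp_sub_mul_sq hc hz hconc hmono hφ') hint.integrableOn measurableSet_Ioi
          fun x hx ↦ ?_) (by positivity)
        gcongr
        exact le_tangentLine_of_concaveOn hconc hx hz hφ'
    _ ≤ √c / √π * ∫ x, exp (φ z + b * (x - z) - c * x ^ 2) := by
        refine mul_le_mul_of_nonneg_left ?_ (by positivity)
        exact setIntegral_le_integral hint (.of_forall fun x ↦ exp_nonneg _)
    _ = exp (φ z - b * z + b ^ 2 / (4 * c)) := by
        rw [integral_exp_linear_sub_mul_sq b (φ z) z hc, sqrt_div pi_pos.le]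
        field_simp

lemma le_halfGaussianMean (hc : 0 < c) (hz : 0 < z) (hconc : ConcaveOn ℝ (Ioi 0) φ)
    (hmono : MonotoneOn φ (Ioi 0)) (hφ' : HasDerivAt φ b z) :
    exp (φ z - (√c * z + 1) ^ 2) / √π ≤ halfGaussianMean c φ := by
  have hint := integrableOn_exp_sub_mul_sq hc hz hconc hmono hφ'
  have hsub : Ioc z (z + 1 / √c) ⊆ Ioi 0 := fun x hx ↦ hz.trans hx.1
  have hbound : ∀ x ∈ Ioc z (z + 1 / √c),
      exp (φ z - (√c * z + 1) ^ 2) ≤ exp (φ x - c * x ^ 2) := by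
    intro x hx
    have hφ : φ z ≤ φ x := hmono hz (hsub hx) hx.1.le
    have hsqrt : √c * x ≤ √c * z + 1 := by
      calc √c * x ≤ √c * (z + 1 / √c) := by gcongr; exact hx.2
        _ = √c * z + 1 := by field_simp
    have hsq : c * x ^ 2 ≤ (√c * z + 1) ^ 2 := by
      calc c * x ^ 2 = (√c * x) ^ 2 := by rw [mul_pow, sq_sqrt hc.le]
        _ ≤ (√c * z + 1) ^ 2 := pow_le_pow_left₀ (mul_nonneg (sqrt_nonneg c) (hsub hx).le) hsqrt 2
    gcongr
  calc
    exp (φ z - (√c * z + 1) ^ 2) / √π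
      = √c / √π * ∫ _ in Ioc z (z + 1 / √c), exp (φ z - (√c * z + 1) ^ 2) := by
        rw [setIntegral_const, Real.volume_real_Ioc_of_le (by simp), smul_eq_mul]
        field_simp
        ring
    _ ≤ √c / √π * ∫ x in Ioc z (z + 1 / √c), exp (φ x - c * x ^ 2) := by
        refine mul_le_mul_of_nonneg_left ?_ (by positivity)
        exact setIntegral_mono_on (by simp) (hint.mono_set hsub) measurableSet_Ioc hbound
    _ ≤ halfGaussianMean c φ := by
        refine mul_le_mul_of_nonneg_left ?_ (by positivity)
        exact setIntegral_mono_set hint (.of_forall fun x ↦ exp_nonneg _) hsub.eventuallyLE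

lemma halfGaussianMean_pos (hc : 0 < c) (hz : 0 < z) (hconc : ConcaveOn ℝ (Ioi 0) φ)
    (hmono : MonotoneOn φ (Ioi 0)) (hφ' : HasDerivAt φ b z) : 0 < halfGaussianMean c φ :=
  lt_of_lt_of_le (by positivity) (le_halfGaussianMean hc hz hconc hmono hφ')

lemma log_halfGaussianMean_div_le (hc : 0 < c) (hz : 0 < z) (hconc : ConcaveOn ℝ (Ioi 0) φ)
    (hmono : MonotoneOn φ (Ioi 0)) (hφ' : HasDerivAt φ b z) :
    log (halfGaussianMean c φ) / c ≤ φ z / c - b / c * z + (b / c) ^ 2 / 4 := by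
  have hlog := (log_le_iff_le_exp (halfGaussianMean_pos hc hz hconc hmono hφ')).2
    (halfGaussianMean_le hc hz hconc hmono hφ')
  calc
    log (halfGaussianMean c φ) / c ≤ (φ z - b * z + b ^ 2 / (4 * c)) / c := by gcongr
    _ = φ z / c - b / c * z + (b / c) ^ 2 / 4 := by field_simp

lemma le_log_halfGaussianMean_div (hc : 0 < c) (hz : 0 < z) (hconc : ConcaveOn ℝ (Ioi 0) φ)
    (hmono : MonotoneOn φ (Ioi 0)) (hφ' : HasDerivAt φ b z) :
    φ z / c - (z + 1 / √c) ^ 2 - log √π / c ≤ log (halfGaussianMean c φ) / c := by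
  have hlog := log_le_log (by positivity) (le_halfGaussianMean hc hz hconc hmono hφ')
  rw [log_div (exp_pos _).ne' (by positivity), log_exp] at hlog
  have hsq : (√c * z + 1) ^ 2 = c * (z + 1 / √c) ^ 2 := by
    nth_rw 2 [← sq_sqrt hc.le]
    field_simp
  calc
    φ z / c - (z + 1 / √c) ^ 2 - log √π / c = (φ z - (√c * z + 1) ^ 2 - log √π) / c := by
      rw [hsq]
      field_simp
    _ ≤ log (halfGaussianMean c φ) / c := by gcongr

theorem tendsto_log_halfGaussianMean_div {ι : Type*} {l : Filter ι} {c b : ι → ℝ}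
    {φ : ι → ℝ → ℝ} {z κ : ℝ} (hz : 0 < z) (hc : Tendsto c l atTop)
    (hconc : ∀ i, ConcaveOn ℝ (Ioi 0) (φ i)) (hmono : ∀ i, MonotoneOn (φ i) (Ioi 0))
    (hφ' : ∀ i, HasDerivAt (φ i) (b i) z)
    (hb : Tendsto (fun i ↦ b i / c i) l (𝓝 (2 * z)))
    (hφ : Tendsto (fun i ↦ φ i z / c i) l (𝓝 κ)) :
    Tendsto (fun i ↦ log (halfGaussianMean (c i) (φ i)) / c i) l (𝓝 (κ - z ^ 2)) := by
  have hlower : Tendsto (fun i ↦ φ i z / c i - (z + 1 / √(c i)) ^ 2 - log √π / c i) l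
      (𝓝 (κ - z ^ 2)) := by
    have hsqrt : Tendsto (fun i ↦ 1 / √(c i)) l (𝓝 0) :=
      (tendsto_sqrt_atTop.comp hc).const_div_atTop 1
    simpa using (hφ.sub ((hsqrt.const_add z).pow 2)).sub (hc.const_div_atTop (log √π))
  have hupper : Tendsto (fun i ↦ φ i z / c i - b i / c i * z + (b i / c i) ^ 2 / 4) l
      (𝓝 (κ - z ^ 2)) := by
    convert (hφ.sub (hb.mul_const z)).add ((hb.pow 2).div_const 4) using 2
    ring
  refine tendsto_of_tendsto_of_tendsto_of_le_of_le' hlower hupper ?_ ?_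
  · filter_upwards [hc.eventually_gt_atTop 0] with i hci
    exact le_log_halfGaussianMean_div hci hz (hconc i) (hmono i) (hφ' i)
  · filter_upwards [hc.eventually_gt_atTop 0] with i hci
    exact log_halfGaussianMean_div_le hci hz (hconc i) (hmono i) (hφ' i)

end HalfGaussianMean

section Erf

lemma hasDerivAt_erfG (x : ℝ) : HasDerivAt erfG (erfg x) x := by
  have hcont : Continuous fun y : ℝ ↦ exp (-y ^ 2) := by fun_prop
  exact (hcont.integral_hasStrictDerivAt 0 x).hasDerivAt.const_mul _

lemma erfg_pos (x : ℝ) : 0 < erfg x := by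
  unfold erfg
  positivity

lemma antitoneOn_erfg : AntitoneOn erfg (Ici 0) := by
  intro x (hx : 0 ≤ x) y _ hxy
  unfold erfg
  gcongr

lemma strictMono_erfG : StrictMono erfG :=
  strictMono_of_hasDerivAt_pos hasDerivAt_erfG erfg_pos

lemma erfG_pos {x : ℝ} (hx : 0 < x) : 0 < erfG x := by
  simpa [erfG] using strictMono_erfG hx

lemma hasDerivAt_log_erfG {x : ℝ} (hx : 0 < x) :
    HasDerivAt (fun y ↦ log (erfG y)) (erfg x / erfG x) x :=
  (hasDerivAt_erfG x).log (erfG_pos hx).ne'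

lemma monotoneOn_log_erfG : MonotoneOn (fun x ↦ log (erfG x)) (Ioi 0) :=
  fun _ hx _ _ hxy ↦ log_le_log (erfG_pos hx) (strictMono_erfG.monotone hxy)

lemma antitoneOn_erfg_div_erfG : AntitoneOn (fun x ↦ erfg x / erfG x) (Ioi 0) :=
  fun _ hx _ hy hxy ↦ div_le_div₀ (erfg_pos _).le
    (antitoneOn_erfg (Ioi_subset_Ici_self hx) (Ioi_subset_Ici_self hy) hxy)
    (erfG_pos hx) (strictMono_erfG.monotone hxy)

lemma concaveOn_log_erfG : ConcaveOn ℝ (Ioi 0) fun x ↦ log (erfG x) := by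
  have hderiv : EqOn (fun x ↦ erfg x / erfG x) (deriv fun x ↦ log (erfG x)) (Ioi 0) :=
    fun x hx ↦ (hasDerivAt_log_erfG hx).deriv.symm
  refine AntitoneOn.concaveOn_of_deriv (convex_Ioi 0)
    (fun x hx ↦ (hasDerivAt_log_erfG hx).continuousAt.continuousWithinAt) ?_ ?_
  · rw [interior_Ioi]
    exact fun x hx ↦ (hasDerivAt_log_erfG hx).differentiableAt.differentiableWithinAt
  · rw [interior_Ioi]
    exact antitoneOn_erfg_div_erfG.congr hderiv

end Erf

/-- The logarithm `p log G(x) + q log G(W x)` of the weight `G(x) ^ p * G(W x) ^ q` in the external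
angle integral. The exponents are real so that it is linear in `(p, q)`. -/
noncomputable def logErfGWeight (W p q x : ℝ) : ℝ :=
  p * log (erfG x) + q * log (erfG (W * x))

/-- The derivative in `x` of `logErfGWeight W p q x`. -/
noncomputable def logErfGWeightDeriv (W p q x : ℝ) : ℝ :=
  p * (erfg x / erfG x) + q * (erfg (W * x) / erfG (W * x) * W)

section LogErfGWeight

variable {W p q x : ℝ}

lemma hasDerivAt_logErfGWeight (hW : 0 < W) (hx : 0 < x) :
    HasDerivAt (logErfGWeight W p q) (logErfGWeightDeriv W p q x) x := by
  have hscaled : HasDerivAt (fun y ↦ log (erfG (W * y)))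
      (erfg (W * x) / erfG (W * x) * W) x :=
    (hasDerivAt_log_erfG (mul_pos hW hx)).comp x (hasDerivAt_const_mul W)
  exact ((hasDerivAt_log_erfG hx).const_mul p).add (hscaled.const_mul q)

lemma concaveOn_logErfGWeight (hW : 0 < W) (hp : 0 ≤ p) (hq : 0 ≤ q) :
    ConcaveOn ℝ (Ioi 0) (logErfGWeight W p q) :=
  (concaveOn_log_erfG.smul hp).add ((concaveOn_comp_mul_left_Ioi hW concaveOn_log_erfG).smul hq)

lemma monotoneOn_logErfGWeight (hW : 0 < W) (hp : 0 ≤ p) (hq : 0 ≤ q) :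
    MonotoneOn (logErfGWeight W p q) (Ioi 0) := by
  intro x hx y hy hxy
  have hfst := monotoneOn_log_erfG hx hy hxy
  have hsnd := monotoneOn_log_erfG (mul_pos hW hx) (mul_pos hW hy)
    (mul_le_mul_of_nonneg_left hxy hW.le)
  exact add_le_add (mul_le_mul_of_nonneg_left hfst hp) (mul_le_mul_of_nonneg_left hsnd hq)

lemma exp_logErfGWeight_natCast (hW : 0 < W) (hx : 0 < x) (m n : ℕ) :
    exp (logErfGWeight W m n x) = erfG x ^ m * erfG (W * x) ^ n := by
  rw [logErfGWeight, exp_add, exp_nat_mul, exp_nat_mul, exp_log (erfG_pos hx),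
    exp_log (erfG_pos (mul_pos hW hx))]

lemma halfGaussianMean_logErfGWeight_natCast (hW : 0 < W) {c : ℝ} (hc : 0 ≤ c) (m n : ℕ) :
    halfGaussianMean c (logErfGWeight W m n) =
      √c / √π * ∫ x in Ioi 0, exp (-√c ^ 2 * x ^ 2) * erfG x ^ m * erfG (W * x) ^ n := by
  rw [halfGaussianMean]
  congr 1
  refine setIntegral_congr_fun measurableSet_Ioi fun x hx ↦ ?_
  rw [sq_sqrt hc, sub_eq_neg_add, ← neg_mul, exp_add, exp_logErfGWeight_natCast hW hx, mul_assoc]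

lemma logErfGWeightDeriv_div_eq_two_mul (hW : 0 < W) (hx : 0 < x) {C : ℝ} (hC : C ≠ 0)
    (h : 2 * C - p * erfg x / (x * erfG x) - q * W * erfg (W * x) / (x * erfG (W * x)) = 0) :
    logErfGWeightDeriv W (p / C) (q / C) x = 2 * x := by
  have hG := (erfG_pos hx).ne'
  have hGW := (erfG_pos (mul_pos hW hx)).ne'
  rw [logErfGWeightDeriv]
  field_simp [hG, hGW] at h ⊢
  linarith

lemma tendsto_logErfGWeight_div {ι : Type*} {l : Filter ι} {c r₁ r₂ : ι → ℝ}
    (hr₁ : Tendsto (fun i ↦ r₁ i / c i) l (𝓝 p)) (hr₂ : Tendsto (fun i ↦ r₂ i / c i) l (𝓝 q)) :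
    Tendsto (fun i ↦ logErfGWeight W (r₁ i) (r₂ i) x / c i) l (𝓝 (logErfGWeight W p q x)) := by
  simpa only [logErfGWeight, add_div, mul_div_right_comm] using
    (hr₁.mul_const (log (erfG x))).add (hr₂.mul_const (log (erfG (W * x))))

lemma tendsto_logErfGWeightDeriv_div {ι : Type*} {l : Filter ι} {c r₁ r₂ : ι → ℝ}
    (hr₁ : Tendsto (fun i ↦ r₁ i / c i) l (𝓝 p)) (hr₂ : Tendsto (fun i ↦ r₂ i / c i) l (𝓝 q)) :
    Tendsto (fun i ↦ logErfGWeightDeriv W (r₁ i) (r₂ i) x / c i) l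
      (𝓝 (logErfGWeightDeriv W p q x)) := by
  simpa only [logErfGWeightDeriv, add_div, mul_div_right_comm (r₁ _), mul_div_right_comm (r₂ _)]
    using (hr₁.mul_const (erfg x / erfG x)).add
      (hr₂.mul_const (erfg (W * x) / erfG (W * x) * W))

theorem tendsto_log_halfGaussianMean_logErfGWeight_div {ι : Type*} {l : Filter ι}
    {c r₁ r₂ : ι → ℝ} (hW : 0 < W) (hx : 0 < x) (hc : Tendsto c l atTop)
    (hr₁_nonneg : ∀ i, 0 ≤ r₁ i) (hr₂_nonneg : ∀ i, 0 ≤ r₂ i)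
    (hr₁ : Tendsto (fun i ↦ r₁ i / c i) l (𝓝 p)) (hr₂ : Tendsto (fun i ↦ r₂ i / c i) l (𝓝 q))
    (hcrit : logErfGWeightDeriv W p q x = 2 * x) :
    Tendsto (fun i ↦ log (halfGaussianMean (c i) (logErfGWeight W (r₁ i) (r₂ i))) / c i) l
      (𝓝 (logErfGWeight W p q x - x ^ 2)) :=
  tendsto_log_halfGaussianMean_div hx hc
    (fun i ↦ concaveOn_logErfGWeight hW (hr₁_nonneg i) (hr₂_nonneg i))
    (fun i ↦ monotoneOn_logErfGWeight hW (hr₁_nonneg i) (hr₂_nonneg i))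
    (fun _ ↦ hasDerivAt_logErfGWeight hW hx)
    (hcrit ▸ tendsto_logErfGWeightDeriv_div hr₁ hr₂) (tendsto_logErfGWeight_div hr₁ hr₂)

end LogErfGWeight

/-- Theorem 1 of the paper, external angle exponent: with
`γ_n = (ξ_n/√π) ∫_0^∞ e^{−ξ_n²x²} G(x)^{r₁(n)} G(Wx)^{r₂(n)} dx`, `ξ_n = √(Cn)`,
`r₁(n)/n → D₁`, `r₂(n)/n → D₂`, one has
`−(1/n) log γ_n → C x₀² − D₁ log G(x₀) − D₂ log G(W x₀)`,
where `x₀ > 0` is the unique positive solution of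
`2C − D₁ g(x)/(xG(x)) − D₂ W g(Wx)/(xG(Wx)) = 0`. -/
theorem external_angle_exponent_limit
    (C W D₁ D₂ : ℝ) (hC : 0 < C) (hW : 0 < W) (hD₁ : 0 < D₁) (hD₂ : 0 < D₂)
    (r₁ r₂ : ℕ → ℕ)
    (hr₁ : Tendsto (fun n : ℕ => (r₁ n : ℝ) / n) atTop (𝓝 D₁))
    (hr₂ : Tendsto (fun n : ℕ => (r₂ n : ℝ) / n) atTop (𝓝 D₂))
    (γ : ℕ → ℝ)
    (hγ : ∀ n : ℕ, 1 ≤ n → γ n =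
      (Real.sqrt (C * n) / Real.sqrt Real.pi) *
        ∫ x in Set.Ioi (0 : ℝ),
          Real.exp (-(Real.sqrt (C * n)) ^ 2 * x ^ 2) *
            (erfG x) ^ (r₁ n) * (erfG (W * x)) ^ (r₂ n))
    (x₀ : ℝ) (hx₀pos : 0 < x₀)
    (hx₀ : 2 * C - D₁ * erfg x₀ / (x₀ * erfG x₀)
        - D₂ * W * erfg (W * x₀) / (x₀ * erfG (W * x₀)) = 0) :
    Tendsto (fun n : ℕ => -(1 / (n : ℝ)) * Real.log (γ n)) atTop
      (𝓝 (C * x₀ ^ 2 - D₁ * Real.log (erfG x₀) - D₂ * Real.log (erfG (W * x₀)))) := by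
  have hscale : Tendsto (fun n : ℕ ↦ C * (n : ℝ)) atTop atTop :=
    tendsto_natCast_atTop_atTop.const_mul_atTop hC
  have hrescale {r : ℕ → ℕ} {D : ℝ} (hr : Tendsto (fun n ↦ (r n : ℝ) / n) atTop (𝓝 D)) :
      Tendsto (fun n ↦ (r n : ℝ) / (C * n)) atTop (𝓝 (D / C)) := by
    simpa only [div_div, mul_comm C] using hr.div_const C
  have hlim := tendsto_log_halfGaussianMean_logErfGWeight_div hW hx₀pos hscale
    (fun n ↦ (r₁ n).cast_nonneg) (fun n ↦ (r₂ n).cast_nonneg) (hrescale hr₁) (hrescale hr₂)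
    (logErfGWeightDeriv_div_eq_two_mul hW hx₀pos hC.ne' hx₀)
  convert (hlim.const_mul (-C)).congr' ?_ using 2
  · rw [logErfGWeight]
    field_simp
    ring
  · filter_upwards [eventually_ge_atTop 1] with n hn
    rw [hγ n hn, ← halfGaussianMean_logErfGWeight_natCast hW (by positivity)]
    field_simp
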